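/- Let d ≥ 1 and let γ be the standard Gaussian measure on ℝ^d. Let A be a symmetric positive definite d×d matrix, let μ be the centered Gaussian measure on ℝ^d with covariance matrix A, and let ν be the Gaussian measure on ℝ^d with arbitrary mean m ∈ ℝ^d and covariance matrix A⁻¹. Then equality holds in the symmetrized Talagrand inequality: W₂(μ, ν)² = 2 Ent_γ(μ) + 2 Ent_γ(ν). -/

import Mathlib

open MeasureTheory ENNReal
open scoped RealInnerProductSpace

/-- The standard Gaussian measure on `ℝ^d`, with density
`(2π)^{-d/2} exp(-|x|²/2)` with respect to Lebesgue measure. -/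
noncomputable def stdGaussian (d : ℕ) : Measure (EuclideanSpace ℝ (Fin d)) :=
  volume.withDensity fun x =>
    ENNReal.ofReal ((2 * Real.pi) ^ (-(d : ℝ) / 2) * Real.exp (-‖x‖ ^ 2 / 2))

/-- `π` is a coupling of `μ` and `ν`: a measure on the product with the given marginals. -/
def IsCoupling {E : Type*} [MeasurableSpace E] (π : Measure (E × E)) (μ ν : Measure E) : Prop :=
  π.map Prod.fst = μ ∧ π.map Prod.snd = ν

/-- The squared `L²` Kantorovich-Wasserstein distance `W₂(μ,ν)²`: the infimum of
`∫ |x-y|² dπ` over all couplings `π` of `μ` and `ν`. -/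
noncomputable def W2sq {E : Type*} [MeasurableSpace E] [NormedAddCommGroup E]
    (μ ν : Measure E) : ℝ≥0∞ :=
  ⨅ (π : Measure (E × E)) (_ : IsCoupling π μ ν), ∫⁻ p, (‖p.1 - p.2‖₊ : ℝ≥0∞) ^ 2 ∂π

open Classical in
/-- The relative entropy (KL divergence) `Ent_γ(μ) = ∫ log(dμ/dγ) dμ` if `μ ≪ γ` (and the
integral makes sense), and `+∞` otherwise. -/
noncomputable def relEnt {E : Type*} [MeasurableSpace E] (μ γ : Measure E) : ℝ≥0∞ :=
  if μ ≪ γ ∧ Integrable (fun x => Real.log (μ.rnDeriv γ x).toReal) μ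
  then ENNReal.ofReal (∫ x, Real.log (μ.rnDeriv γ x).toReal ∂μ)
  else ∞

/-- The Gaussian measure `N(m, A)` on `ℝ^d` with mean `m` and (invertible) covariance
matrix `A`, given by its density with respect to Lebesgue measure. -/
noncomputable def gaussianMeasure {d : ℕ} (m : EuclideanSpace ℝ (Fin d))
    (A : Matrix (Fin d) (Fin d) ℝ) : Measure (EuclideanSpace ℝ (Fin d)) :=
  volume.withDensity fun x =>
    ENNReal.ofReal (((2 * Real.pi) ^ d * A.det) ^ (-(1 : ℝ) / 2) *
      Real.exp (-⟪x - m, Matrix.toEuclideanLin A⁻¹ (x - m)⟫ / 2))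

/-!
The equality is Kantorovich duality with explicit potentials. Twice the log-density of `N(m₁, A)`
with respect to `γ`, plus twice the log-density of `N(m₂, A⁻¹)`, corrected by affine functions,
equals `‖x - y‖²` minus the Fenchel–Young defect `⟪x', A⁻¹ x'⟫ + ⟪y', A y'⟫ - 2⟪x', y'⟫` of the
centred variables `x' = x - m₁`, `y' = y - m₂`. This defect is the nonnegative quantity
`⟪y' - A⁻¹ x', A (y' - A⁻¹ x')⟫`, which vanishes on the graph of `x ↦ m₂ + A⁻¹ (x - m₁)`, a map
sending `N(m₁, A)` to `N(m₂, A⁻¹)`. So the potentials are optimal. Their integrals sum to twice the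
two entropies minus `2⟪m₁, m₂⟫`, and this last term is zero as soon as the means are orthogonal.
-/

section Transport

theorem ofReal_integral_le_lintegral_ofReal {α : Type*} [MeasurableSpace α] {μ : Measure α}
    {f : α → ℝ} (hf : Integrable f μ) :
    ENNReal.ofReal (∫ x, f x ∂μ) ≤ ∫⁻ x, ENNReal.ofReal (f x) ∂μ := by
  rw [integral_eq_lintegral_pos_part_sub_lintegral_neg_part hf]
  exact ENNReal.ofReal_le_of_le_toReal (sub_le_self _ ENNReal.toReal_nonneg)

section Marginals

variable {E : Type*} [MeasurableSpace E] {π : Measure (E × E)} {μ ν : Measure E}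

theorem isCoupling_map_prodMk {Ω : Type*} [MeasurableSpace Ω] (P : Measure Ω) {X Y : Ω → E}
    (hX : Measurable X) (hY : Measurable Y) :
    IsCoupling (P.map fun ω => (X ω, Y ω)) (P.map X) (P.map Y) :=
  ⟨Measure.fst_map_prodMk hY, Measure.snd_map_prodMk hX⟩

namespace IsCoupling

theorem measurePreserving_fst (hπ : IsCoupling π μ ν) : MeasurePreserving Prod.fst π μ :=
  ⟨measurable_fst, hπ.1⟩

theorem measurePreserving_snd (hπ : IsCoupling π μ ν) : MeasurePreserving Prod.snd π ν :=
  ⟨measurable_snd, hπ.2⟩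

variable {φ ψ : E → ℝ}

theorem integrable_add (hπ : IsCoupling π μ ν) (hφ : Integrable φ μ) (hψ : Integrable ψ ν) :
    Integrable (fun p => φ p.1 + ψ p.2) π :=
  (hπ.measurePreserving_fst.integrable_comp_of_integrable hφ).add
    (hπ.measurePreserving_snd.integrable_comp_of_integrable hψ)

theorem integral_add (hπ : IsCoupling π μ ν) (hφ : Integrable φ μ) (hψ : Integrable ψ ν) :
    ∫ p, φ p.1 + ψ p.2 ∂π = ∫ x, φ x ∂μ + ∫ y, ψ y ∂ν := by
  obtain ⟨rfl, rfl⟩ := hπ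
  rw [integral_map measurable_fst.aemeasurable hφ.aestronglyMeasurable,
    integral_map measurable_snd.aemeasurable hψ.aestronglyMeasurable]
  exact MeasureTheory.integral_add (hφ.comp_measurable measurable_fst)
    (hψ.comp_measurable measurable_snd)

end IsCoupling

end Marginals

variable {E : Type*} [MeasurableSpace E] [NormedAddCommGroup E] {π : Measure (E × E)}
  {μ ν : Measure E} {φ ψ : E → ℝ}

theorem ofReal_integral_add_integral_le_W2sq (hφ : Integrable φ μ) (hψ : Integrable ψ ν)
    (hle : ∀ x y, φ x + ψ y ≤ ‖x - y‖ ^ 2) :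
    ENNReal.ofReal (∫ x, φ x ∂μ + ∫ y, ψ y ∂ν) ≤ W2sq μ ν := by
  refine le_iInf₂ fun π hπ => ?_
  calc ENNReal.ofReal (∫ x, φ x ∂μ + ∫ y, ψ y ∂ν)
      = ENNReal.ofReal (∫ p, φ p.1 + ψ p.2 ∂π) := by rw [hπ.integral_add hφ hψ]
    _ ≤ ∫⁻ p, ENNReal.ofReal (φ p.1 + ψ p.2) ∂π :=
        ofReal_integral_le_lintegral_ofReal (hπ.integrable_add hφ hψ)
    _ ≤ ∫⁻ p, ENNReal.ofReal (‖p.1 - p.2‖ ^ 2) ∂π :=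
        lintegral_mono fun p => ENNReal.ofReal_le_ofReal (hle p.1 p.2)
    _ = ∫⁻ p, (‖p.1 - p.2‖₊ : ℝ≥0∞) ^ 2 ∂π := by
        simp_rw [ENNReal.ofReal_pow (norm_nonneg _), ofReal_norm, enorm_eq_nnnorm]

theorem IsCoupling.W2sq_le_ofReal_integral_add_integral (hπ : IsCoupling π μ ν)
    (hφ : Integrable φ μ) (hψ : Integrable ψ ν)
    (heq : ∀ᵐ p ∂π, φ p.1 + ψ p.2 = ‖p.1 - p.2‖ ^ 2) :
    W2sq μ ν ≤ ENNReal.ofReal (∫ x, φ x ∂μ + ∫ y, ψ y ∂ν) := by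
  have hnonneg : 0 ≤ᵐ[π] fun p => φ p.1 + ψ p.2 := by
    filter_upwards [heq] with p hp
    exact hp ▸ sq_nonneg ‖p.1 - p.2‖
  calc W2sq μ ν ≤ ∫⁻ p, (‖p.1 - p.2‖₊ : ℝ≥0∞) ^ 2 ∂π := iInf₂_le π hπ
    _ = ∫⁻ p, ENNReal.ofReal (φ p.1 + ψ p.2) ∂π := by
        refine lintegral_congr_ae (heq.mono fun p hp => ?_)
        simp only [hp, ENNReal.ofReal_pow (norm_nonneg _), ofReal_norm, enorm_eq_nnnorm]
    _ = ENNReal.ofReal (∫ x, φ x ∂μ + ∫ y, ψ y ∂ν) := by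
        rw [← ofReal_integral_eq_lintegral_ofReal (hπ.integrable_add hφ hψ) hnonneg,
          hπ.integral_add hφ hψ]

end Transport

section WithDensity

variable {α β : Type*} [MeasurableSpace α] [MeasurableSpace β]

theorem map_withDensity_comp (μ : Measure α) {f : α → β} (hf : Measurable f) {g : β → ℝ≥0∞}
    (hg : Measurable g) :
    (μ.withDensity fun x => g (f x)).map f = (μ.map f).withDensity g := by
  ext s hs
  rw [Measure.map_apply hf hs, withDensity_apply _ (hf hs), withDensity_apply _ hs,
    setLIntegral_map hs hg hf]

variable {γ ν : Measure α} {f : α → ℝ}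

theorem llr_ae_eq_of_eq_withDensity_exp [SigmaFinite γ] (hf : Measurable f)
    (hν : ν = γ.withDensity fun x => ENNReal.ofReal (Real.exp (f x))) : llr ν γ =ᵐ[ν] f := by
  subst hν
  filter_upwards [(withDensity_absolutelyContinuous _ _).ae_le
    (Measure.rnDeriv_withDensity γ hf.exp.ennreal_ofReal)] with x hx
  rw [llr, hx, ENNReal.toReal_ofReal (Real.exp_pos _).le, Real.log_exp]

theorem relEnt_of_eq_withDensity_exp [SigmaFinite γ] (hf : Measurable f)
    (hν : ν = γ.withDensity fun x => ENNReal.ofReal (Real.exp (f x))) (hint : Integrable f ν) :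
    relEnt ν γ = ENNReal.ofReal (∫ x, f x ∂ν) := by
  have hllr := llr_ae_eq_of_eq_withDensity_exp hf hν
  rw [← integral_congr_ae hllr]
  exact if_pos ⟨hν ▸ withDensity_absolutelyContinuous _ _, (integrable_congr hllr).mpr hint⟩

theorem integral_nonneg_of_eq_withDensity_exp [IsProbabilityMeasure γ] [IsProbabilityMeasure ν]
    (hf : Measurable f) (hν : ν = γ.withDensity fun x => ENNReal.ofReal (Real.exp (f x))) :
    0 ≤ ∫ x, f x ∂ν := by
  have hac : ν ≪ γ := hν ▸ withDensity_absolutelyContinuous _ _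
  rw [← integral_congr_ae (llr_ae_eq_of_eq_withDensity_exp hf hν),
    ← InformationTheory.toReal_klDiv_of_measure_eq hac (by simp)]
  exact ENNReal.toReal_nonneg

end WithDensity

section Affine

variable {F : Type*} [NormedAddCommGroup F] [NormedSpace ℝ F] [FiniteDimensional ℝ F]
  [MeasurableSpace F] [BorelSpace F]

theorem map_affine_addHaar (μ : Measure F) [μ.IsAddHaarMeasure] {f : F →ₗ[ℝ] F}
    (hf : LinearMap.det f ≠ 0) (a b : F) :
    μ.map (fun x => b + f (x - a)) = ENNReal.ofReal |(LinearMap.det f)⁻¹| • μ := by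
  have hfm : Measurable f := f.continuous_of_finiteDimensional.measurable
  calc μ.map (fun x => b + f (x - a))
      = ((μ.map (· - a)).map f).map (b + ·) := by
        rw [Measure.map_map hfm (measurable_sub_const a),
          Measure.map_map (measurable_const_add b) (hfm.comp (measurable_sub_const a))]
        rfl
    _ = ENNReal.ofReal |(LinearMap.det f)⁻¹| • μ := by
        rw [map_sub_right_eq_self, Measure.map_linearMap_addHaar_eq_smul_addHaar μ hf,
          Measure.map_smul, map_add_left_eq_self]

end Affine

section QuadraticForm

theorem inner_add_inner_sub_two_mul_inner {F : Type*} [NormedAddCommGroup F]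
    [InnerProductSpace ℝ F] {S T : F →ₗ[ℝ] F} (hT : T.IsSymmetric) (hTS : ∀ x, T (S x) = x)
    (x y : F) :
    ⟪x, S x⟫ + ⟪y, T y⟫ - 2 * ⟪x, y⟫ = ⟪y - S x, T (y - S x)⟫ := by
  rw [map_sub, hTS, inner_sub_left, inner_sub_right, inner_sub_right, ← hT (S x), hTS,
    real_inner_comm x y, real_inner_comm x (S x)]
  ring

variable {n : Type*} [Fintype n] [DecidableEq n]

theorem toEuclideanLin_toEuclideanLin (M N : Matrix n n ℝ) (x : EuclideanSpace ℝ n) :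
    M.toEuclideanLin (N.toEuclideanLin x) = (M * N).toEuclideanLin x := by
  rw [Matrix.toLpLin_mul_same, LinearMap.comp_apply]

theorem inner_toEuclideanLin_left (M : Matrix n n ℝ) (x y : EuclideanSpace ℝ n) :
    ⟪M.toEuclideanLin x, y⟫ = ⟪x, M.transpose.toEuclideanLin y⟫ := by
  rw [← Matrix.conjTranspose_eq_transpose_of_trivial,
    Matrix.toEuclideanLin_conjTranspose_eq_adjoint, LinearMap.adjoint_inner_right]

theorem inner_toEuclideanLin_inv_congr (A : Matrix n n ℝ) {M : Matrix n n ℝ} (hM : IsUnit M.det)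
    (x : EuclideanSpace ℝ n) :
    ⟪M.toEuclideanLin x, (M * A * M.transpose)⁻¹.toEuclideanLin (M.toEuclideanLin x)⟫ =
      ⟪x, A⁻¹.toEuclideanLin x⟫ := by
  have hcongr : M.transpose * (M * A * M.transpose)⁻¹ * M = A⁻¹ := by
    rw [Matrix.mul_inv_rev, Matrix.mul_inv_rev,
      Matrix.mul_nonsing_inv_cancel_left _ _ (by rwa [Matrix.det_transpose]),
      Matrix.nonsing_inv_mul_cancel_right _ _ hM]
  rw [inner_toEuclideanLin_left, toEuclideanLin_toEuclideanLin, toEuclideanLin_toEuclideanLin,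
    hcongr]

end QuadraticForm

section GaussianMeasure

variable {d : ℕ}

/-- The Lebesgue density of `gaussianMeasure m A`. -/
noncomputable def gaussianDensity (m : EuclideanSpace ℝ (Fin d)) (A : Matrix (Fin d) (Fin d) ℝ)
    (x : EuclideanSpace ℝ (Fin d)) : ℝ≥0∞ :=
  ENNReal.ofReal (((2 * Real.pi) ^ d * A.det) ^ (-(1 : ℝ) / 2) *
    Real.exp (-⟪x - m, A⁻¹.toEuclideanLin (x - m)⟫ / 2))

theorem gaussianMeasure_eq_withDensity_volume (m : EuclideanSpace ℝ (Fin d))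
    (A : Matrix (Fin d) (Fin d) ℝ) :
    gaussianMeasure m A = volume.withDensity (gaussianDensity m A) :=
  rfl

theorem measurable_gaussianDensity (m : EuclideanSpace ℝ (Fin d))
    (A : Matrix (Fin d) (Fin d) ℝ) : Measurable (gaussianDensity m A) := by
  unfold gaussianDensity
  fun_prop

theorem abs_mul_sq_mul_rpow_neg_half {c t : ℝ} (hc : c ≠ 0) (ht : 0 ≤ t) :
    |c| * (c ^ 2 * t) ^ (-(1 : ℝ) / 2) = t ^ (-(1 : ℝ) / 2) := by
  rw [Real.mul_rpow (sq_nonneg c) ht, ← sq_abs, ← Real.rpow_natCast, ← Real.rpow_mul (abs_nonneg c),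
    ← mul_assoc]
  norm_num [Real.rpow_neg_one, hc]

variable {A M : Matrix (Fin d) (Fin d) ℝ}

theorem gaussianDensity_affine (hA : 0 ≤ A.det) (hM : M.det ≠ 0)
    (m₁ m₂ x : EuclideanSpace ℝ (Fin d)) :
    gaussianDensity m₁ A x = ENNReal.ofReal |M.det| *
      gaussianDensity m₂ (M * A * M.transpose) (m₂ + M.toEuclideanLin (x - m₁)) := by
  have hdet : (2 * Real.pi) ^ d * (M * A * M.transpose).det =
      M.det ^ 2 * ((2 * Real.pi) ^ d * A.det) := by
    rw [Matrix.det_mul, Matrix.det_mul, Matrix.det_transpose]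
    ring
  rw [gaussianDensity, gaussianDensity, ← ENNReal.ofReal_mul (abs_nonneg _), add_sub_cancel_left,
    inner_toEuclideanLin_inv_congr A hM.isUnit, hdet, ← mul_assoc,
    abs_mul_sq_mul_rpow_neg_half hM (by positivity)]

theorem gaussianMeasure_map_affine (hA : 0 ≤ A.det) (hM : M.det ≠ 0)
    (m₁ m₂ : EuclideanSpace ℝ (Fin d)) :
    (gaussianMeasure m₁ A).map (fun x => m₂ + M.toEuclideanLin (x - m₁)) =
      gaussianMeasure m₂ (M * A * M.transpose) := by
  set ρ := gaussianDensity m₂ (M * A * M.transpose)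
  have hρ : Measurable ρ := measurable_gaussianDensity _ _
  have hdet : LinearMap.det M.toEuclideanLin = M.det := LinearMap.det_toLpLin 2 M
  have hcancel : ENNReal.ofReal |M.det| * ENNReal.ofReal |M.det⁻¹| = 1 := by
    rw [← ENNReal.ofReal_mul (abs_nonneg _), ← abs_mul, mul_inv_cancel₀ hM, abs_one,
      ENNReal.ofReal_one]
  calc (gaussianMeasure m₁ A).map (fun x => m₂ + M.toEuclideanLin (x - m₁))
      = (volume.withDensity fun x => (ENNReal.ofReal |M.det| • ρ)
          (m₂ + M.toEuclideanLin (x - m₁))).map (fun x => m₂ + M.toEuclideanLin (x - m₁)) := by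
        rw [gaussianMeasure_eq_withDensity_volume]
        congr 2
        exact funext (gaussianDensity_affine hA hM m₁ m₂)
    _ = (volume.map fun x => m₂ + M.toEuclideanLin (x - m₁)).withDensity
          (ENNReal.ofReal |M.det| • ρ) :=
        map_withDensity_comp _ (by fun_prop) (hρ.const_smul _)
    _ = volume.withDensity ρ := by
        rw [map_affine_addHaar _ (hdet ▸ hM), hdet, withDensity_smul _ hρ,
          withDensity_smul_measure, smul_smul, hcancel, one_smul]

theorem two_pi_pow_rpow_neg_half (d : ℕ) :
    ((2 * Real.pi) ^ d) ^ (-(1 : ℝ) / 2) = (2 * Real.pi) ^ (-(d : ℝ) / 2) := by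
  rw [← Real.rpow_natCast, ← Real.rpow_mul (by positivity), mul_div_assoc', mul_neg_one]

theorem gaussianMeasure_zero_one (d : ℕ) : gaussianMeasure 0 1 = stdGaussian d := by
  simp [gaussianMeasure, stdGaussian, two_pi_pow_rpow_neg_half]

theorem integrable_exp_neg_norm_sq_div_two {V : Type*} [NormedAddCommGroup V]
    [InnerProductSpace ℝ V] [FiniteDimensional ℝ V] [MeasurableSpace V] [BorelSpace V] :
    Integrable fun x : V => Real.exp (-‖x‖ ^ 2 / 2) := by
  have hexp (x : V) : -‖x‖ ^ 2 / 2 = -(1 / 2) * ‖x‖ ^ 2 := by ring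
  simp_rw [hexp]
  refine Integrable.of_integral_ne_zero ?_
  rw [GaussianFourier.integral_rexp_neg_mul_sq_norm (by norm_num)]
  positivity

instance isFiniteMeasure_stdGaussian (d : ℕ) : IsFiniteMeasure (stdGaussian d) :=
  isFiniteMeasure_withDensity_ofReal (integrable_exp_neg_norm_sq_div_two.const_mul _).2

open Complex in
theorem charFun_stdGaussian (d : ℕ) (t : EuclideanSpace ℝ (Fin d)) :
    charFun (stdGaussian d) t = cexp (-‖t‖ ^ 2 / 2) := by
  have hpi : (0 : ℝ) < 2 * Real.pi := by positivity
  have hintegrand (x : EuclideanSpace ℝ (Fin d)) :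
      (ENNReal.ofReal ((2 * Real.pi) ^ (-(d : ℝ) / 2) * Real.exp (-‖x‖ ^ 2 / 2))).toReal •
        cexp (⟪x, t⟫ * I) =
      (2 * Real.pi : ℂ) ^ (-(d : ℂ) / 2) * cexp (-(1 / 2) * ‖x‖ ^ 2 + I * ⟪t, x⟫) := by
    rw [ENNReal.toReal_ofReal (by positivity), real_smul, real_inner_comm, Complex.ofReal_mul,
      ofReal_cpow hpi.le, ofReal_exp, mul_assoc, ← Complex.exp_add]
    push_cast
    ring_nf
  have hconst : (2 * Real.pi : ℂ) ^ (-(d : ℂ) / 2) * (Real.pi / (1 / 2)) ^ ((d : ℂ) / 2) = 1 := by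
    rw [neg_div, cpow_neg, show (Real.pi / (1 / 2) : ℂ) = 2 * Real.pi by ring]
    exact inv_mul_cancel₀ (by simp [cpow_eq_zero_iff, Real.pi_ne_zero])
  rw [charFun_apply, stdGaussian, integral_withDensity_eq_integral_toReal_smul (by fun_prop)
    (by simp)]
  simp_rw [hintegrand]
  rw [integral_const_mul, GaussianFourier.integral_cexp_neg_mul_sq_norm_add (by norm_num),
    finrank_euclideanSpace_fin, ← mul_assoc, hconst, one_mul, I_sq]
  ring_nf

theorem stdGaussian_eq_probabilityTheory_stdGaussian (d : ℕ) :
    stdGaussian d = ProbabilityTheory.stdGaussian (EuclideanSpace ℝ (Fin d)) := by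
  refine Measure.ext_of_charFun (funext fun t => ?_)
  rw [charFun_stdGaussian, ProbabilityTheory.charFun_stdGaussian]

instance isProbabilityMeasure_stdGaussian (d : ℕ) : IsProbabilityMeasure (stdGaussian d) :=
  stdGaussian_eq_probabilityTheory_stdGaussian d ▸ inferInstance

open scoped MatrixOrder in
theorem gaussianMeasure_eq_multivariateGaussian (hA : A.PosDef) (m : EuclideanSpace ℝ (Fin d)) :
    gaussianMeasure m A = ProbabilityTheory.multivariateGaussian m A := by
  have hsymm : (CFC.sqrt A).transpose = CFC.sqrt A := by
    simpa [Matrix.IsHermitian] using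
      (Matrix.nonneg_iff_posSemidef.mp (CFC.sqrt_nonneg A)).isHermitian
  have hsq : CFC.sqrt A * CFC.sqrt A = A := CFC.sqrt_mul_sqrt_self A hA.posSemidef.nonneg
  have hdet : (CFC.sqrt A).det ≠ 0 := fun h =>
    hA.det_pos.ne' (by rw [← hsq, Matrix.det_mul, h, zero_mul])
  calc gaussianMeasure m A
      = gaussianMeasure m (CFC.sqrt A * 1 * (CFC.sqrt A).transpose) := by
        rw [hsymm, Matrix.mul_one, hsq]
    _ = (gaussianMeasure 0 1).map fun x => m + (CFC.sqrt A).toEuclideanLin (x - 0) :=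
        (gaussianMeasure_map_affine (by simp) hdet 0 m).symm
    _ = ProbabilityTheory.multivariateGaussian m A := by
        simp only [gaussianMeasure_zero_one, stdGaussian_eq_probabilityTheory_stdGaussian, sub_zero]
        rfl

theorem isGaussian_gaussianMeasure (hA : A.PosDef) (m : EuclideanSpace ℝ (Fin d)) :
    ProbabilityTheory.IsGaussian (gaussianMeasure m A) :=
  gaussianMeasure_eq_multivariateGaussian hA m ▸ inferInstance

theorem integral_id_gaussianMeasure (hA : A.PosDef) (m : EuclideanSpace ℝ (Fin d)) :
    ∫ x, x ∂gaussianMeasure m A = m := by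
  rw [gaussianMeasure_eq_multivariateGaussian hA,
    ProbabilityTheory.integral_id_multivariateGaussian]

end GaussianMeasure

section LogDensity

variable {d : ℕ} {A : Matrix (Fin d) (Fin d) ℝ}

/-- The logarithm of the density of `gaussianMeasure m A` with respect to `stdGaussian d`. Its
integral against `gaussianMeasure m A` is the relative entropy. -/
noncomputable def gaussianLogDensity (m : EuclideanSpace ℝ (Fin d))
    (A : Matrix (Fin d) (Fin d) ℝ) (x : EuclideanSpace ℝ (Fin d)) : ℝ :=
  (‖x‖ ^ 2 - ⟪x - m, A⁻¹.toEuclideanLin (x - m)⟫ - Real.log A.det) / 2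

@[fun_prop]
theorem measurable_gaussianLogDensity (m : EuclideanSpace ℝ (Fin d))
    (A : Matrix (Fin d) (Fin d) ℝ) : Measurable (gaussianLogDensity m A) := by
  unfold gaussianLogDensity
  fun_prop

theorem gaussianMeasure_eq_withDensity_stdGaussian (hA : 0 < A.det)
    (m : EuclideanSpace ℝ (Fin d)) :
    gaussianMeasure m A = (stdGaussian d).withDensity
      fun x => ENNReal.ofReal (Real.exp (gaussianLogDensity m A x)) := by
  rw [stdGaussian, ← withDensity_mul _ (by fun_prop) (by fun_prop), gaussianMeasure]
  congr 1
  ext x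
  rw [Pi.mul_apply, ← ENNReal.ofReal_mul (by positivity)]
  congr 1
  rw [Real.mul_rpow (by positivity) hA.le, two_pi_pow_rpow_neg_half, Real.rpow_def_of_pos hA,
    mul_assoc, mul_assoc, ← Real.exp_add, ← Real.exp_add, gaussianLogDensity]
  ring_nf

theorem integrable_inner_of_memLp_two {α F : Type*} [MeasurableSpace α] [NormedAddCommGroup F]
    [InnerProductSpace ℝ F] {μ : Measure α} {f g : α → F} (hf : MemLp f 2 μ) (hg : MemLp g 2 μ) :
    Integrable (fun x => ⟪f x, g x⟫) μ :=
  memLp_one_iff_integrable.mp ((innerSL ℝ).memLp_of_bilin 1 hf hg)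

theorem integrable_gaussianLogDensity (hA : A.PosDef) (m : EuclideanSpace ℝ (Fin d)) :
    Integrable (gaussianLogDensity m A) (gaussianMeasure m A) := by
  have := isGaussian_gaussianMeasure hA m
  have hid : MemLp (fun x => x) 2 (gaussianMeasure m A) :=
    ProbabilityTheory.IsGaussian.memLp_two_id
  have hcentered : MemLp (fun x => x - m) 2 (gaussianMeasure m A) := hid.sub (memLp_const m)
  have hquad : Integrable (fun x => ⟪x - m, A⁻¹.toEuclideanLin (x - m)⟫) (gaussianMeasure m A) :=
    integrable_inner_of_memLp_two hcentered
      (A⁻¹.toEuclideanLin.toContinuousLinearMap.comp_memLp' hcentered)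
  exact (((hid.integrable_norm_pow two_ne_zero).sub hquad).sub (integrable_const _)).div_const 2

theorem relEnt_gaussianMeasure (hA : A.PosDef) (m : EuclideanSpace ℝ (Fin d)) :
    relEnt (gaussianMeasure m A) (stdGaussian d) =
      ENNReal.ofReal (∫ x, gaussianLogDensity m A x ∂gaussianMeasure m A) :=
  relEnt_of_eq_withDensity_exp (measurable_gaussianLogDensity m A)
    (gaussianMeasure_eq_withDensity_stdGaussian hA.det_pos m) (integrable_gaussianLogDensity hA m)

theorem integral_gaussianLogDensity_nonneg (hA : A.PosDef) (m : EuclideanSpace ℝ (Fin d)) :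
    0 ≤ ∫ x, gaussianLogDensity m A x ∂gaussianMeasure m A := by
  have := isGaussian_gaussianMeasure hA m
  exact integral_nonneg_of_eq_withDensity_exp (measurable_gaussianLogDensity m A)
    (gaussianMeasure_eq_withDensity_stdGaussian hA.det_pos m)

end LogDensity

section Potential

variable {d : ℕ} {A : Matrix (Fin d) (Fin d) ℝ}

/-- The Kantorovich potential on the side of `gaussianMeasure m₁ A` for the transport to
`gaussianMeasure m₂ A⁻¹` with cost `‖x - y‖ ^ 2`. The constant `⟪m₁, m₂⟫` is split evenly between
the two potentials, so that the one on the side of `gaussianMeasure m₂ A⁻¹` is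
`gaussianPotential m₂ A⁻¹ m₁`. -/
noncomputable def gaussianPotential (m₁ : EuclideanSpace ℝ (Fin d))
    (A : Matrix (Fin d) (Fin d) ℝ) (m₂ x : EuclideanSpace ℝ (Fin d)) : ℝ :=
  2 * gaussianLogDensity m₁ A x - 2 * ⟪m₂, x⟫ + ⟪m₁, m₂⟫

@[fun_prop]
theorem measurable_gaussianPotential (m₁ : EuclideanSpace ℝ (Fin d))
    (A : Matrix (Fin d) (Fin d) ℝ) (m₂ : EuclideanSpace ℝ (Fin d)) :
    Measurable (gaussianPotential m₁ A m₂) := by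
  unfold gaussianPotential
  fun_prop

theorem integrable_gaussianPotential (hA : A.PosDef) (m₁ m₂ : EuclideanSpace ℝ (Fin d)) :
    Integrable (gaussianPotential m₁ A m₂) (gaussianMeasure m₁ A) := by
  have := isGaussian_gaussianMeasure hA m₁
  have hid : Integrable (fun x => x) (gaussianMeasure m₁ A) :=
    ProbabilityTheory.IsGaussian.integrable_id
  exact (((integrable_gaussianLogDensity hA m₁).const_mul 2).sub
    ((hid.const_inner m₂).const_mul 2)).add (integrable_const _)

theorem integral_gaussianPotential (hA : A.PosDef) (m₁ m₂ : EuclideanSpace ℝ (Fin d)) :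
    ∫ x, gaussianPotential m₁ A m₂ x ∂gaussianMeasure m₁ A =
      2 * ∫ x, gaussianLogDensity m₁ A x ∂gaussianMeasure m₁ A - ⟪m₁, m₂⟫ := by
  have := isGaussian_gaussianMeasure hA m₁
  have hlog := (integrable_gaussianLogDensity hA m₁).const_mul 2
  have hid : Integrable (fun x => x) (gaussianMeasure m₁ A) :=
    ProbabilityTheory.IsGaussian.integrable_id
  have hlin : Integrable (fun x => 2 * ⟪m₂, x⟫) (gaussianMeasure m₁ A) :=
    (hid.const_inner m₂).const_mul 2
  calc ∫ x, gaussianPotential m₁ A m₂ x ∂gaussianMeasure m₁ A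
      = ∫ x, (2 * gaussianLogDensity m₁ A x - 2 * ⟪m₂, x⟫) ∂gaussianMeasure m₁ A + ⟪m₁, m₂⟫ := by
        exact (integral_add (hlog.sub hlin) (integrable_const _)).trans (by simp)
    _ = 2 * ∫ x, gaussianLogDensity m₁ A x ∂gaussianMeasure m₁ A - ⟪m₁, m₂⟫ := by
        rw [integral_sub hlog hlin, integral_const_mul, integral_const_mul, integral_inner hid,
          integral_id_gaussianMeasure hA, real_inner_comm]
        ring

theorem gaussianPotential_add_gaussianPotential (hA : A.PosDef)
    (m₁ m₂ x y : EuclideanSpace ℝ (Fin d)) :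
    gaussianPotential m₁ A m₂ x + gaussianPotential m₂ A⁻¹ m₁ y = ‖x - y‖ ^ 2 -
      ⟪y - m₂ - A⁻¹.toEuclideanLin (x - m₁),
        A.toEuclideanLin (y - m₂ - A⁻¹.toEuclideanLin (x - m₁))⟫ := by
  have hdet : IsUnit A.det := hA.det_pos.ne'.isUnit
  have hcancel (z : EuclideanSpace ℝ (Fin d)) :
      A.toEuclideanLin (A⁻¹.toEuclideanLin z) = z := by
    rw [toEuclideanLin_toEuclideanLin, Matrix.mul_nonsing_inv _ hdet, Matrix.toLpLin_one,
      LinearMap.id_apply]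
  have hsymm := Matrix.isSymmetric_toEuclideanLin_iff.mpr hA.isHermitian
  rw [← inner_add_inner_sub_two_mul_inner hsymm hcancel, gaussianPotential, gaussianPotential,
    gaussianLogDensity, gaussianLogDensity,
    Matrix.nonsing_inv_nonsing_inv _ hdet, Matrix.det_nonsing_inv, Ring.inverse_eq_inv',
    Real.log_inv, norm_sub_sq_real, inner_sub_left x m₁ (y - m₂), inner_sub_right x y m₂,
    inner_sub_right m₁ y m₂, real_inner_comm x m₂, real_inner_comm m₁ m₂]
  ring

theorem gaussianPotential_add_gaussianPotential_le (hA : A.PosDef)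
    (m₁ m₂ x y : EuclideanSpace ℝ (Fin d)) :
    gaussianPotential m₁ A m₂ x + gaussianPotential m₂ A⁻¹ m₁ y ≤ ‖x - y‖ ^ 2 := by
  rw [gaussianPotential_add_gaussianPotential hA, sub_le_self_iff]
  exact (Matrix.isPositive_toEuclideanLin_iff.mpr hA.posSemidef).inner_nonneg_right _

theorem gaussianPotential_add_gaussianPotential_eq (hA : A.PosDef)
    (m₁ m₂ x : EuclideanSpace ℝ (Fin d)) :
    gaussianPotential m₁ A m₂ x +
        gaussianPotential m₂ A⁻¹ m₁ (m₂ + A⁻¹.toEuclideanLin (x - m₁)) =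
      ‖x - (m₂ + A⁻¹.toEuclideanLin (x - m₁))‖ ^ 2 := by
  rw [gaussianPotential_add_gaussianPotential hA, add_sub_cancel_left, sub_self, map_zero,
    inner_zero_left, sub_zero]

end Potential

section Talagrand

variable {d : ℕ} {A : Matrix (Fin d) (Fin d) ℝ}

theorem gaussianMeasure_map_inv (hA : A.PosDef) (m₁ m₂ : EuclideanSpace ℝ (Fin d)) :
    (gaussianMeasure m₁ A).map (fun x => m₂ + A⁻¹.toEuclideanLin (x - m₁)) =
      gaussianMeasure m₂ A⁻¹ := by
  have hsymm : A⁻¹.transpose = A⁻¹ := by simpa using hA.inv.isHermitian.eq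
  rw [gaussianMeasure_map_affine hA.det_pos.le hA.inv.det_pos.ne', hsymm,
    Matrix.nonsing_inv_mul _ hA.det_pos.ne'.isUnit, Matrix.one_mul]

theorem isCoupling_gaussianMeasure_inv (hA : A.PosDef) (m₁ m₂ : EuclideanSpace ℝ (Fin d)) :
    IsCoupling ((gaussianMeasure m₁ A).map fun x => (x, m₂ + A⁻¹.toEuclideanLin (x - m₁)))
      (gaussianMeasure m₁ A) (gaussianMeasure m₂ A⁻¹) := by
  have h := isCoupling_map_prodMk (gaussianMeasure m₁ A) measurable_id
    (show Measurable fun x => m₂ + A⁻¹.toEuclideanLin (x - m₁) by fun_prop)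
  rwa [Measure.map_id, gaussianMeasure_map_inv hA] at h

theorem W2sq_gaussianMeasure_inv (hA : A.PosDef) (m₁ m₂ : EuclideanSpace ℝ (Fin d)) :
    W2sq (gaussianMeasure m₁ A) (gaussianMeasure m₂ A⁻¹) =
      ENNReal.ofReal (∫ x, gaussianPotential m₁ A m₂ x ∂gaussianMeasure m₁ A +
        ∫ y, gaussianPotential m₂ A⁻¹ m₁ y ∂gaussianMeasure m₂ A⁻¹) := by
  have hφ := integrable_gaussianPotential hA m₁ m₂
  have hψ := integrable_gaussianPotential hA.inv m₂ m₁
  refine le_antisymm ?_ (ofReal_integral_add_integral_le_W2sq hφ hψ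
    (gaussianPotential_add_gaussianPotential_le hA m₁ m₂))
  refine (isCoupling_gaussianMeasure_inv hA m₁ m₂).W2sq_le_ofReal_integral_add_integral hφ hψ ?_
  rw [ae_map_iff (by fun_prop) (measurableSet_eq_fun (by fun_prop) (by fun_prop))]
  exact ae_of_all _ (gaussianPotential_add_gaussianPotential_eq hA m₁ m₂)

theorem symmetrized_talagrand_eq_of_gaussian_general (hA : A.PosDef)
    {m₁ m₂ : EuclideanSpace ℝ (Fin d)} (hm : ⟪m₁, m₂⟫ = 0) :
    W2sq (gaussianMeasure m₁ A) (gaussianMeasure m₂ A⁻¹) =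
      2 * relEnt (gaussianMeasure m₁ A) (stdGaussian d) +
      2 * relEnt (gaussianMeasure m₂ A⁻¹) (stdGaussian d) := by
  have hnonneg₁ := integral_gaussianLogDensity_nonneg hA m₁
  have hnonneg₂ := integral_gaussianLogDensity_nonneg hA.inv m₂
  rw [W2sq_gaussianMeasure_inv hA, integral_gaussianPotential hA,
    integral_gaussianPotential hA.inv, real_inner_comm m₁ m₂, hm, sub_zero, sub_zero,
    ENNReal.ofReal_add (by positivity) (by positivity), ENNReal.ofReal_mul zero_le_two,
    ENNReal.ofReal_mul zero_le_two, ENNReal.ofReal_ofNat, relEnt_gaussianMeasure hA,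
    relEnt_gaussianMeasure hA.inv]

end Talagrand

/-- **Equality cases of the symmetrized Talagrand inequality, sufficiency**: if `A` is a
symmetric positive definite matrix, `μ = N(0, A)` and `ν = N(m, A⁻¹)` for any `m ∈ ℝ^d`, then
`W₂(μ,ν)² = 2 Ent_γ(μ) + 2 Ent_γ(ν)`. -/
theorem symmetrized_talagrand_eq_of_gaussian (d : ℕ) (hd : 1 ≤ d)
    (A : Matrix (Fin d) (Fin d) ℝ) (hA : A.PosDef) (hAsymm : A.IsSymm)
    (m : EuclideanSpace ℝ (Fin d)) :
    W2sq (gaussianMeasure 0 A) (gaussianMeasure m A⁻¹) =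
      2 * relEnt (gaussianMeasure 0 A) (stdGaussian d) +
      2 * relEnt (gaussianMeasure m A⁻¹) (stdGaussian d) :=
  symmetrized_talagrand_eq_of_gaussian_general hA (inner_zero_left m)
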